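/- Assume the discounted ARE has a unique symmetric positive semidefinite solution X* with stabilizing gain F* := −γ(R + γB'X*B)⁻¹B'X*A satisfying ρ(A + BF*) < 1, and let S* := S(F*) be the unique symmetric positive definite solution of γ A_{F*} S A_{F*}' + Γ + (γ/(1−γ)) F̄* Σw (F̄*)' = S. Consider the feasible set 𝒮 := {(S, F) : S ∈ ℝ^{(n+m)×(n+m)} symmetric positive definite, F ∈ ℝ^{m×n}, γ A_F S A_F' + Γ + (γ/(1−γ)) F̄ Σw F̄' = S}. Then (S*, F*) ∈ 𝒮, and for every (S, F) ∈ 𝒮 one has tr(Λ S) ≥ tr(Λ S*), with equality if and only if S = S* and F = F*; in particular, (S*, F*) is the unique minimizer of tr(Λ S) over 𝒮. -/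

import Mathlib

open Matrix MeasureTheory Filter
open scoped ENNReal

/-- Spectral radius of a real square matrix: the maximum modulus of its complex
eigenvalues, expressed via the spectral radius of its complexification. -/
noncomputable def specRad {ι : Type*} [Fintype ι] [DecidableEq ι]
    (M : Matrix ι ι ℝ) : ℝ≥0∞ :=
  spectralRadius ℂ (M.map Complex.ofReal)

/-- The block matrix `A_F = [[A, B], [FA, FB]]`. -/
noncomputable def blockAF {n m : ℕ} (A : Matrix (Fin n) (Fin n) ℝ)
    (B : Matrix (Fin n) (Fin m) ℝ) (F : Matrix (Fin m) (Fin n) ℝ) :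
    Matrix (Fin n ⊕ Fin m) (Fin n ⊕ Fin m) ℝ :=
  Matrix.fromBlocks A B (F * A) (F * B)

/-- The block column matrix `F̄ = [I_n; F]`. -/
noncomputable def extendF {n m : ℕ} (F : Matrix (Fin m) (Fin n) ℝ) :
    Matrix (Fin n ⊕ Fin m) (Fin n) ℝ :=
  Matrix.fromRows (1 : Matrix (Fin n) (Fin n) ℝ) F

/-- The block diagonal matrix `Λ = diag(Q, R)`. -/
noncomputable def blockLam {n m : ℕ} (Q : Matrix (Fin n) (Fin n) ℝ)
    (R : Matrix (Fin m) (Fin m) ℝ) :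
    Matrix (Fin n ⊕ Fin m) (Fin n ⊕ Fin m) ℝ :=
  Matrix.fromBlocks Q 0 0 R

/-- The LQR gain `F = -γ (R + γ B' X B)⁻¹ B' X A` associated with `X`. -/
noncomputable def gainF {n m : ℕ} (A : Matrix (Fin n) (Fin n) ℝ)
    (B : Matrix (Fin n) (Fin m) ℝ) (R : Matrix (Fin m) (Fin m) ℝ)
    (γ : ℝ) (X : Matrix (Fin n) (Fin n) ℝ) : Matrix (Fin m) (Fin n) ℝ :=
  -(γ • ((R + γ • (Bᵀ * X * B))⁻¹ * (Bᵀ * X * A)))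

/-- `P = [[Q + γA'XA, γA'XB], [γB'XA, R + γB'XB]]`. -/
noncomputable def Pmat {n m : ℕ} (A : Matrix (Fin n) (Fin n) ℝ)
    (B : Matrix (Fin n) (Fin m) ℝ) (Q : Matrix (Fin n) (Fin n) ℝ)
    (R : Matrix (Fin m) (Fin m) ℝ) (γ : ℝ) (X : Matrix (Fin n) (Fin n) ℝ) :
    Matrix (Fin n ⊕ Fin m) (Fin n ⊕ Fin m) ℝ :=
  Matrix.fromBlocks (Q + γ • (Aᵀ * X * A)) (γ • (Aᵀ * X * B))
    (γ • (Bᵀ * X * A)) (R + γ • (Bᵀ * X * B))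

/-- `X` solves the discounted algebraic Riccati equation
`X = Q + γA'XA − γ²A'XB(R + γB'XB)⁻¹B'XA`. -/
def IsAREsol {n m : ℕ} (A : Matrix (Fin n) (Fin n) ℝ)
    (B : Matrix (Fin n) (Fin m) ℝ) (Q : Matrix (Fin n) (Fin n) ℝ)
    (R : Matrix (Fin m) (Fin m) ℝ) (γ : ℝ) (X : Matrix (Fin n) (Fin n) ℝ) : Prop :=
  X = Q + γ • (Aᵀ * X * A)
    - (γ ^ 2) • (Aᵀ * X * B * (R + γ • (Bᵀ * X * B))⁻¹ * (Bᵀ * X * A))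

/-!
Write `G = [A, B]`, so that `A_F = F̄ G`. A feasible `S` equals `Γ + F̄ N F̄'` with
`N = γ G S G' + c Σw` positive definite, and `Λ = P - γ G' X G` for the block matrix `P` of the
Riccati equation. Completing the square, `F̄' P F̄ = X + (F - F*)' H (F - F*)` with
`H = R + γ B' X B`, whence

  `tr (Λ S) = tr (P Γ) + c tr (X Σw) + tr ((F - F*)' H (F - F*) N)`.

Only the last term depends on `(S, F)`; it is nonnegative and vanishes exactly when `F = F*`. In
that case `N` is a positive definite solution of the Lyapunov equation
`N = γ (A + B F*) N (A + B F*)' + γ G Γ G' + c Σw` with positive definite constant term. Such an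
equation has no other solution, so `N`, and with it `S`, is determined by `F*`.
-/

section Trace

open scoped ComplexOrder

variable {𝕜 ι κ : Type*} [RCLike 𝕜] [Fintype ι]

open scoped MatrixOrder in
lemma exists_eq_conjTranspose_mul_self {M : Matrix ι ι 𝕜} (hM : M.PosSemidef) :
    ∃ L : Matrix ι ι 𝕜, M = Lᴴ * L := by
  classical
  exact CStarAlgebra.nonneg_iff_eq_star_mul_self.mp hM.nonneg

lemma trace_mul_nonneg {P M : Matrix ι ι 𝕜} (hP : P.PosSemidef) (hM : M.PosSemidef) :
    0 ≤ (P * M).trace := by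
  obtain ⟨L, rfl⟩ := exists_eq_conjTranspose_mul_self hM
  rw [← Matrix.mul_assoc, trace_mul_cycle]
  exact (hP.mul_mul_conjTranspose_same L).trace_nonneg

lemma trace_mul_eq_zero_iff {P M : Matrix ι ι 𝕜} (hP : P.PosSemidef) (hM : M.PosDef) :
    (P * M).trace = 0 ↔ P = 0 := by
  classical
  refine ⟨fun h => ?_, fun h => by simp [h]⟩
  obtain ⟨L, rfl⟩ := exists_eq_conjTranspose_mul_self hM.posSemidef
  have hL : IsUnit L := isUnit_of_mul_isUnit_right hM.isUnit
  rw [← Matrix.mul_assoc, trace_mul_cycle,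
    (hP.mul_mul_conjTranspose_same L).trace_eq_zero_iff] at h
  have hLH : IsUnit Lᴴ := hL.star
  rwa [hLH.mul_left_eq_zero, hL.mul_right_eq_zero] at h

lemma conjTranspose_mul_mul_eq_zero_iff {H : Matrix ι ι 𝕜} (hH : H.PosDef) {D : Matrix ι κ 𝕜} :
    Dᴴ * H * D = 0 ↔ D = 0 := by
  classical
  refine ⟨fun h => ?_, fun h => by simp [h]⟩
  obtain ⟨K, rfl⟩ := exists_eq_conjTranspose_mul_self hH.posSemidef
  have hKD : (K * D)ᴴ * (K * D) = 0 := by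
    simpa only [conjTranspose_mul, Matrix.mul_assoc] using h
  have hK : IsUnit K.det :=
    (isUnit_iff_isUnit_det K).mp (isUnit_of_mul_isUnit_right hH.isUnit)
  rw [← nonsing_inv_mul_cancel_left K D hK, conjTranspose_mul_self_eq_zero.mp hKD, Matrix.mul_zero]

end Trace

section RealTrace

variable {ι κ : Type*} [Fintype κ]

lemma posSemidef_transpose_mul_mul_same [Finite ι] {H : Matrix κ κ ℝ} (hH : H.PosSemidef)
    (D : Matrix κ ι ℝ) : (Dᵀ * H * D).PosSemidef := by
  simpa only [conjTranspose_eq_transpose_of_trivial] using hH.conjTranspose_mul_mul_same D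

lemma posSemidef_mul_mul_transpose_same [Finite ι] {M : Matrix κ κ ℝ} (hM : M.PosSemidef)
    (D : Matrix ι κ ℝ) : (D * M * Dᵀ).PosSemidef := by
  simpa only [conjTranspose_eq_transpose_of_trivial] using hM.mul_mul_conjTranspose_same D

lemma posDef_add_smul_transpose_mul_mul [Finite ι] {R : Matrix ι ι ℝ} {X : Matrix κ κ ℝ} {γ : ℝ}
    (hR : R.PosDef) (hX : X.PosSemidef) (hγ : 0 ≤ γ) (B : Matrix κ ι ℝ) :
    (R + γ • (Bᵀ * X * B)).PosDef :=
  hR.add_posSemidef ((posSemidef_transpose_mul_mul_same hX B).smul hγ)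

variable [Fintype ι]

lemma trace_transpose_mul_mul_mul_nonneg {H : Matrix κ κ ℝ} {M : Matrix ι ι ℝ}
    (hH : H.PosSemidef) (hM : M.PosSemidef) (D : Matrix κ ι ℝ) :
    0 ≤ (Dᵀ * H * D * M).trace :=
  trace_mul_nonneg (posSemidef_transpose_mul_mul_same hH D) hM

lemma trace_transpose_mul_mul_mul_eq_zero_iff {H : Matrix κ κ ℝ} {M : Matrix ι ι ℝ}
    (hH : H.PosDef) (hM : M.PosDef) {D : Matrix κ ι ℝ} :
    (Dᵀ * H * D * M).trace = 0 ↔ D = 0 := by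
  rw [trace_mul_eq_zero_iff (posSemidef_transpose_mul_mul_same hH.posSemidef D) hM,
    ← conjTranspose_eq_transpose_of_trivial, conjTranspose_mul_mul_eq_zero_iff hH]

end RealTrace

section Lyapunov

variable {ι : Type*} [Fintype ι] {M S D Y Z : Matrix ι ι ℝ} {γ : ℝ}

lemma trace_transpose_mul_mul_mul_comm (hS : S.IsSymm) (Y Z : Matrix ι ι ℝ) :
    (Yᵀ * S * Z * S).trace = (Zᵀ * S * Y * S).trace := by
  rw [← trace_transpose, trace_mul_comm (Zᵀ * S * Y)]
  simp only [transpose_mul, transpose_transpose, hS.eq, Matrix.mul_assoc]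

lemma trace_transpose_smul_transpose_mul_mul_mul (γ : ℝ) (M Y U : Matrix ι ι ℝ) :
    ((γ • (Mᵀ * Y * M))ᵀ * U).trace = (Yᵀ * (γ • (M * U * Mᵀ))).trace := by
  simp only [transpose_smul, transpose_mul, transpose_transpose, Matrix.smul_mul, Matrix.mul_smul,
    trace_smul, Matrix.mul_assoc]
  rw [trace_mul_comm Mᵀ]
  simp only [Matrix.mul_assoc]

/-- Cauchy–Schwarz for the inner product `⟨U, V⟩ = tr (U' S V S)`. -/
lemma trace_transpose_mul_mul_mul_le_of_eq (hS : S.PosSemidef)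
    (h : (Zᵀ * S * Y * S).trace = (Yᵀ * S * Y * S).trace) :
    (Yᵀ * S * Y * S).trace ≤ (Zᵀ * S * Z * S).trace := by
  have hsq : ((Z - Y)ᵀ * S * (Z - Y) * S).trace = (Zᵀ * S * Z * S).trace
      - (Zᵀ * S * Y * S).trace - (Yᵀ * S * Z * S).trace + (Yᵀ * S * Y * S).trace := by
    simp only [transpose_sub, Matrix.sub_mul, Matrix.mul_sub, trace_sub]
    ring
  have hnonneg := trace_transpose_mul_mul_mul_nonneg hS hS (Z - Y)
  have hsymm := trace_transpose_mul_mul_mul_comm (isHermitian_iff_isSymm.mp hS.isHermitian) Y Z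
  linarith

/-- For the inner product `⟨U, V⟩ = tr (U' S V S)`, the map `Y ↦ γ M' Y M` strictly shrinks every
nonzero `Y`, whereas a fixed point `S Y S` of `D ↦ γ M D M'` forces `⟨γ M' Y M, Y⟩ = ⟨Y, Y⟩`. -/
lemma eq_zero_of_smul_mul_mul_transpose_eq_self (hγ : 0 ≤ γ) (hS : S.PosDef)
    (hW : (S - γ • (M * S * Mᵀ)).PosDef) (hD : γ • (M * D * Mᵀ) = D) : D = 0 := by
  classical
  have hSdet : IsUnit S.det := (isUnit_iff_isUnit_det S).mp hS.isUnit
  obtain ⟨Y, rfl⟩ : ∃ Y, D = S * Y * S :=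
    ⟨S⁻¹ * D * S⁻¹, by
      rw [← Matrix.mul_assoc, mul_nonsing_inv_cancel_left _ _ hSdet,
        nonsing_inv_mul_cancel_right _ _ hSdet]⟩
  set V := γ • (M * S * Mᵀ) with hV_def
  set W := S - V with hW_def
  set Z := γ • (Mᵀ * Y * M) with hZ_def
  have hV : V.PosSemidef := (posSemidef_mul_mul_transpose_same hS.posSemidef M).smul hγ
  have hcross : (Zᵀ * S * Y * S).trace = (Yᵀ * S * Y * S).trace := by
    have h := trace_transpose_smul_transpose_mul_mul_mul γ M Y (S * Y * S)
    rw [hD, ← hZ_def] at h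
    simpa only [Matrix.mul_assoc] using h
  have hnormZ : (Zᵀ * S * Z * S).trace = (Yᵀ * V * Y * V).trace := by
    simpa only [hZ_def, hV_def, Matrix.smul_mul, Matrix.mul_smul, Matrix.mul_assoc] using
      trace_transpose_smul_transpose_mul_mul_mul γ M Y (S * Z * S)
  have hsplit : (Yᵀ * S * Y * S).trace
      = (Yᵀ * V * Y * V).trace + (Yᵀ * W * Y * V).trace + (Yᵀ * S * Y * W).trace := by
    simp only [hW_def, Matrix.mul_sub, Matrix.sub_mul, trace_sub]
    ring
  have hzero : (Yᵀ * S * Y * W).trace = 0 := by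
    have hle := trace_transpose_mul_mul_mul_le_of_eq hS.posSemidef hcross
    have hWV := trace_transpose_mul_mul_mul_nonneg hW.posSemidef hV Y
    have hSW := trace_transpose_mul_mul_mul_nonneg hS.posSemidef hW.posSemidef Y
    linarith
  rw [(trace_transpose_mul_mul_mul_eq_zero_iff hS hW).mp hzero, Matrix.mul_zero, Matrix.zero_mul]

end Lyapunov

section Primal

variable {n m : ℕ} {A : Matrix (Fin n) (Fin n) ℝ} {B : Matrix (Fin n) (Fin m) ℝ}
  {Q : Matrix (Fin n) (Fin n) ℝ} {R : Matrix (Fin m) (Fin m) ℝ} {γ c : ℝ}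
  {X Sw : Matrix (Fin n) (Fin n) ℝ} {Γ S T : Matrix (Fin n ⊕ Fin m) (Fin n ⊕ Fin m) ℝ}
  {F : Matrix (Fin m) (Fin n) ℝ}

/-- The constraint `γ A_F S A_F' + Γ + c F̄ Σw F̄' = S` of the primal problem, with an arbitrary
weight `c` in place of `γ / (1 - γ)`. -/
def IsFeasible (A : Matrix (Fin n) (Fin n) ℝ) (B : Matrix (Fin n) (Fin m) ℝ) (γ c : ℝ)
    (Sw : Matrix (Fin n) (Fin n) ℝ) (Γ S : Matrix (Fin n ⊕ Fin m) (Fin n ⊕ Fin m) ℝ)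
    (F : Matrix (Fin m) (Fin n) ℝ) : Prop :=
  γ • (blockAF A B F * S * (blockAF A B F)ᵀ) + Γ + c • (extendF F * Sw * (extendF F)ᵀ) = S

/-- The discounted second moment `γ [A, B] S [A, B]' + c Σw` of the successor state when `S` is the
second moment of the state-input pair; it carries the whole dependence of the constraint on `S`. -/
noncomputable def stateCov (A : Matrix (Fin n) (Fin n) ℝ) (B : Matrix (Fin n) (Fin m) ℝ) (γ c : ℝ)
    (Sw : Matrix (Fin n) (Fin n) ℝ) (S : Matrix (Fin n ⊕ Fin m) (Fin n ⊕ Fin m) ℝ) :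
    Matrix (Fin n) (Fin n) ℝ :=
  γ • (fromCols A B * S * (fromCols A B)ᵀ) + c • Sw

lemma stateCov_posDef (hγ : 0 ≤ γ) (hc : 0 < c) (hSw : Sw.PosDef) (hS : S.PosSemidef) :
    (stateCov A B γ c Sw S).PosDef :=
  .posSemidef_add ((posSemidef_mul_mul_transpose_same hS (fromCols A B)).smul hγ) (hSw.smul hc)

lemma blockAF_eq_extendF_mul_fromCols (A : Matrix (Fin n) (Fin n) ℝ)
    (B : Matrix (Fin n) (Fin m) ℝ) (F : Matrix (Fin m) (Fin n) ℝ) :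
    blockAF A B F = extendF F * fromCols A B := by
  rw [blockAF, extendF, fromRows_mul_fromCols, Matrix.one_mul, Matrix.one_mul]

lemma fromCols_mul_extendF (A : Matrix (Fin n) (Fin n) ℝ) (B : Matrix (Fin n) (Fin m) ℝ)
    (F : Matrix (Fin m) (Fin n) ℝ) : fromCols A B * extendF F = A + B * F := by
  rw [extendF, fromCols_mul_fromRows, Matrix.mul_one]

lemma stateCov_add_extendF_mul_mul (N : Matrix (Fin n) (Fin n) ℝ) :
    stateCov A B γ c Sw (Γ + extendF F * N * (extendF F)ᵀ)
      = γ • ((A + B * F) * N * (A + B * F)ᵀ) + stateCov A B γ c Sw Γ := by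
  simp only [stateCov, ← fromCols_mul_extendF, transpose_mul, Matrix.mul_add, Matrix.add_mul,
    smul_add, Matrix.mul_assoc]
  abel

lemma blockLam_eq_Pmat_sub (A : Matrix (Fin n) (Fin n) ℝ) (B : Matrix (Fin n) (Fin m) ℝ)
    (Q : Matrix (Fin n) (Fin n) ℝ) (R : Matrix (Fin m) (Fin m) ℝ) (γ : ℝ)
    (X : Matrix (Fin n) (Fin n) ℝ) :
    blockLam Q R = Pmat A B Q R γ X - γ • ((fromCols A B)ᵀ * X * fromCols A B) := by
  rw [eq_sub_iff_add_eq, blockLam, Pmat, transpose_fromCols, fromRows_mul, fromRows_mul_fromCols,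
    fromBlocks_smul, fromBlocks_add, zero_add, zero_add]

lemma mul_gainF (hH : (R + γ • (Bᵀ * X * B)).PosDef) :
    (R + γ • (Bᵀ * X * B)) * gainF A B R γ X = -(γ • (Bᵀ * X * A)) := by
  have hdet := (isUnit_iff_isUnit_det _).mp hH.isUnit
  rw [gainF, Matrix.mul_neg, Matrix.mul_smul, mul_nonsing_inv_cancel_left _ _ hdet]

lemma gainF_transpose_mul (hX : X.IsSymm) (hH : (R + γ • (Bᵀ * X * B)).PosDef) :
    (gainF A B R γ X)ᵀ * (R + γ • (Bᵀ * X * B)) = -(γ • (Aᵀ * X * B)) := by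
  have hHsymm : (R + γ • (Bᵀ * X * B)).IsSymm :=
    isHermitian_iff_isSymm.mp hH.isHermitian
  rw [← hHsymm.eq, ← transpose_mul, mul_gainF hH]
  simp only [transpose_neg, transpose_smul, transpose_mul, transpose_transpose, hX.eq,
    Matrix.mul_assoc]

lemma IsAREsol.add_eq_sub_mul_gainF (hARE : IsAREsol A B Q R γ X) :
    Q + γ • (Aᵀ * X * A) = X - γ • (Aᵀ * X * B) * gainF A B R γ X := by
  refine eq_sub_of_add_eq (Eq.trans ?_ hARE.symm)
  rw [gainF, Matrix.mul_neg, Matrix.mul_smul, Matrix.smul_mul, smul_smul, ← sq,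
    Matrix.mul_assoc (Aᵀ * X * B), ← sub_eq_add_neg]

lemma extendF_transpose_mul_fromBlocks_mul_extendF (P₁₁ : Matrix (Fin n) (Fin n) ℝ)
    (P₁₂ : Matrix (Fin n) (Fin m) ℝ) (P₂₁ : Matrix (Fin m) (Fin n) ℝ)
    (P₂₂ : Matrix (Fin m) (Fin m) ℝ) (F : Matrix (Fin m) (Fin n) ℝ) :
    (extendF F)ᵀ * fromBlocks P₁₁ P₁₂ P₂₁ P₂₂ * extendF F
      = P₁₁ + Fᵀ * P₂₁ + P₁₂ * F + Fᵀ * P₂₂ * F := by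
  rw [extendF, transpose_fromRows, fromCols_mul_fromBlocks, fromCols_mul_fromRows,
    transpose_one, Matrix.one_mul, Matrix.one_mul, Matrix.mul_one, Matrix.add_mul]
  abel

lemma IsAREsol.extendF_transpose_mul_Pmat_mul_extendF (hARE : IsAREsol A B Q R γ X)
    (hX : X.IsSymm) (hH : (R + γ • (Bᵀ * X * B)).PosDef) (F : Matrix (Fin m) (Fin n) ℝ) :
    (extendF F)ᵀ * Pmat A B Q R γ X * extendF F = X +
      (F - gainF A B R γ X)ᵀ * (R + γ • (Bᵀ * X * B)) * (F - gainF A B R γ X) := by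
  have hsq : (F - gainF A B R γ X)ᵀ * (R + γ • (Bᵀ * X * B)) * (F - gainF A B R γ X)
      = Fᵀ * (R + γ • (Bᵀ * X * B)) * F + Fᵀ * (γ • (Bᵀ * X * A)) + γ • (Aᵀ * X * B) * F
        - γ • (Aᵀ * X * B) * gainF A B R γ X := by
    rw [transpose_sub, Matrix.sub_mul, gainF_transpose_mul hX hH, Matrix.mul_sub, Matrix.sub_mul,
      Matrix.sub_mul, Matrix.mul_assoc Fᵀ _ (gainF A B R γ X), mul_gainF hH]
    simp only [Matrix.mul_neg, Matrix.neg_mul]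
    abel
  rw [Pmat, extendF_transpose_mul_fromBlocks_mul_extendF, hsq, hARE.add_eq_sub_mul_gainF]
  abel

namespace IsFeasible

lemma eq_add_stateCov (h : IsFeasible A B γ c Sw Γ S F) :
    S = Γ + extendF F * stateCov A B γ c Sw S * (extendF F)ᵀ := by
  conv_lhs => rw [← h, blockAF_eq_extendF_mul_fromCols]
  simp only [stateCov, transpose_mul, Matrix.mul_add, Matrix.add_mul, Matrix.mul_smul,
    Matrix.smul_mul, Matrix.mul_assoc]
  abel

lemma stateCov_eq (h : IsFeasible A B γ c Sw Γ S F) :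
    stateCov A B γ c Sw S
      = γ • ((A + B * F) * stateCov A B γ c Sw S * (A + B * F)ᵀ) + stateCov A B γ c Sw Γ :=
  (congrArg (stateCov A B γ c Sw) h.eq_add_stateCov).trans (stateCov_add_extendF_mul_mul _)

lemma unique (hγ : 0 ≤ γ) (hc : 0 < c) (hSw : Sw.PosDef) (hΓ : Γ.PosSemidef)
    (hS : S.PosSemidef) (h : IsFeasible A B γ c Sw Γ S F) (hT : IsFeasible A B γ c Sw Γ T F) :
    S = T := by
  have hW : (stateCov A B γ c Sw S
      - γ • ((A + B * F) * stateCov A B γ c Sw S * (A + B * F)ᵀ)).PosDef := by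
    rw [sub_eq_of_eq_add' h.stateCov_eq]
    exact stateCov_posDef hγ hc hSw hΓ
  have hfix : γ • ((A + B * F) * (stateCov A B γ c Sw S - stateCov A B γ c Sw T) * (A + B * F)ᵀ)
      = stateCov A B γ c Sw S - stateCov A B γ c Sw T := by
    nth_rw 2 [h.stateCov_eq, hT.stateCov_eq]
    rw [Matrix.mul_sub, Matrix.sub_mul, smul_sub, add_sub_add_right_eq_sub]
  have hcov : stateCov A B γ c Sw S = stateCov A B γ c Sw T := sub_eq_zero.mp <|
    eq_zero_of_smul_mul_mul_transpose_eq_self hγ (stateCov_posDef hγ hc hSw hS) hW hfix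
  rw [h.eq_add_stateCov, hT.eq_add_stateCov, hcov]

lemma trace_mul_eq (h : IsFeasible A B γ c Sw Γ S F)
    (P : Matrix (Fin n ⊕ Fin m) (Fin n ⊕ Fin m) ℝ) :
    (P * S).trace
      = (P * Γ).trace + ((extendF F)ᵀ * P * extendF F * stateCov A B γ c Sw S).trace := by
  nth_rw 1 [h.eq_add_stateCov]
  rw [Matrix.mul_add, trace_add, ← Matrix.mul_assoc, trace_mul_comm _ (extendF F)ᵀ]
  simp only [Matrix.mul_assoc]

lemma trace_blockLam_mul (h : IsFeasible A B γ c Sw Γ S F) (hARE : IsAREsol A B Q R γ X)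
    (hX : X.IsSymm) (hH : (R + γ • (Bᵀ * X * B)).PosDef) :
    (blockLam Q R * S).trace = (Pmat A B Q R γ X * Γ).trace + c * (X * Sw).trace +
      ((F - gainF A B R γ X)ᵀ * (R + γ • (Bᵀ * X * B)) * (F - gainF A B R γ X) *
        stateCov A B γ c Sw S).trace := by
  have hcov : (X * stateCov A B γ c Sw S).trace
      = (γ • ((fromCols A B)ᵀ * X * fromCols A B) * S).trace + c * (X * Sw).trace := by
    rw [stateCov, Matrix.mul_add, trace_add, Matrix.mul_smul, Matrix.mul_smul, Matrix.smul_mul,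
      trace_smul, trace_smul, trace_smul, smul_eq_mul c, Matrix.mul_assoc _ᵀ, Matrix.mul_assoc _ᵀ,
      trace_mul_comm (fromCols A B)ᵀ]
    simp only [Matrix.mul_assoc]
  rw [blockLam_eq_Pmat_sub A B Q R γ X, Matrix.sub_mul, trace_sub, h.trace_mul_eq,
    hARE.extendF_transpose_mul_Pmat_mul_extendF hX hH, Matrix.add_mul, trace_add, hcov]
  ring

end IsFeasible

theorem primal_problem_unique_minimizer_general (hγ : 0 ≤ γ) (hc : 0 < c) (hSw : Sw.PosDef)
    (hΓ : Γ.PosSemidef) (hX : X.IsSymm) (hH : (R + γ • (Bᵀ * X * B)).PosDef)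
    (hARE : IsAREsol A B Q R γ X) {Sstar : Matrix (Fin n ⊕ Fin m) (Fin n ⊕ Fin m) ℝ}
    (hSstar : IsFeasible A B γ c Sw Γ Sstar (gainF A B R γ X))
    (hS : S.PosSemidef) (hSF : IsFeasible A B γ c Sw Γ S F) :
    (blockLam Q R * Sstar).trace ≤ (blockLam Q R * S).trace
      ∧ ((blockLam Q R * S).trace = (blockLam Q R * Sstar).trace
          ↔ S = Sstar ∧ F = gainF A B R γ X) := by
  have hcov : (stateCov A B γ c Sw S).PosDef := stateCov_posDef hγ hc hSw hS
  have hgap : (blockLam Q R * S).trace = (blockLam Q R * Sstar).trace +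
      ((F - gainF A B R γ X)ᵀ * (R + γ • (Bᵀ * X * B)) * (F - gainF A B R γ X) *
        stateCov A B γ c Sw S).trace := by
    rw [hSF.trace_blockLam_mul hARE hX hH, hSstar.trace_blockLam_mul hARE hX hH, sub_self,
      Matrix.mul_zero, Matrix.zero_mul, trace_zero, add_zero]
  rw [hgap, le_add_iff_nonneg_right, add_eq_left,
    trace_transpose_mul_mul_mul_eq_zero_iff hH hcov, sub_eq_zero]
  refine ⟨trace_transpose_mul_mul_mul_nonneg hH.posSemidef hcov.posSemidef _, ?_, And.right⟩
  rintro rfl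
  exact ⟨hSF.unique hγ hc hSw hΓ hS hSstar, rfl⟩

end Primal

theorem primal_problem_unique_minimizer (n m : ℕ) (hn : 0 < n) (hm : 0 < m)
    (A : Matrix (Fin n) (Fin n) ℝ) (B : Matrix (Fin n) (Fin m) ℝ)
    (Q : Matrix (Fin n) (Fin n) ℝ) (R : Matrix (Fin m) (Fin m) ℝ)
    (hQ : Q.PosSemidef) (hR : R.PosDef)
    (γ : ℝ) (hγ0 : 0 < γ) (hγ1 : γ < 1)
    (Sw : Matrix (Fin n) (Fin n) ℝ) (hSw : Sw.PosDef)
    (Γ : Matrix (Fin n ⊕ Fin m) (Fin n ⊕ Fin m) ℝ) (hΓ : Γ.PosDef)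
    (Xstar : Matrix (Fin n) (Fin n) ℝ) (hXstar : Xstar.PosSemidef)
    (hARE : IsAREsol A B Q R γ Xstar)
    (hXuniq : ∀ Y : Matrix (Fin n) (Fin n) ℝ,
      Y.PosSemidef → IsAREsol A B Q R γ Y → Y = Xstar)
    (hstab : specRad (A + B * gainF A B R γ Xstar) < 1)
    (Sstar : Matrix (Fin n ⊕ Fin m) (Fin n ⊕ Fin m) ℝ) (hSstar : Sstar.PosDef)
    (hSstareq : γ • (blockAF A B (gainF A B R γ Xstar) * Sstar
          * (blockAF A B (gainF A B R γ Xstar))ᵀ) + Γ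
        + (γ / (1 - γ)) • (extendF (gainF A B R γ Xstar) * Sw
          * (extendF (gainF A B R γ Xstar))ᵀ) = Sstar) :
    (Sstar.PosDef ∧
      γ • (blockAF A B (gainF A B R γ Xstar) * Sstar
          * (blockAF A B (gainF A B R γ Xstar))ᵀ) + Γ
        + (γ / (1 - γ)) • (extendF (gainF A B R γ Xstar) * Sw
          * (extendF (gainF A B R γ Xstar))ᵀ) = Sstar)
    ∧ ∀ (S : Matrix (Fin n ⊕ Fin m) (Fin n ⊕ Fin m) ℝ)
        (F : Matrix (Fin m) (Fin n) ℝ),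
        S.PosDef →
        γ • (blockAF A B F * S * (blockAF A B F)ᵀ) + Γ
            + (γ / (1 - γ)) • (extendF F * Sw * (extendF F)ᵀ) = S →
        (blockLam Q R * Sstar).trace ≤ (blockLam Q R * S).trace
          ∧ ((blockLam Q R * S).trace = (blockLam Q R * Sstar).trace
              ↔ S = Sstar ∧ F = gainF A B R γ Xstar) := by
  have hc : 0 < γ / (1 - γ) := div_pos hγ0 (sub_pos.mpr hγ1)
  have hH := posDef_add_smul_transpose_mul_mul hR hXstar hγ0.le B
  exact ⟨⟨hSstar, hSstareq⟩, fun S F hS hSF =>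
    primal_problem_unique_minimizer_general hγ0.le hc hSw hΓ.posSemidef
      (isHermitian_iff_isSymm.mp hXstar.isHermitian) hH hARE hSstareq hS.posSemidef hSF⟩
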